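/- arXiv:1402.4397 — 2 statements merged into one kernel-verified Lean document; each statement's English description precedes it below -/
import Mathlib

section
/- Let H be a cancellative monoid, T a commutative atomic cancellative monoid, and φ: H → T a monoid homomorphism satisfying (T1). Then: (a) φ is a transfer homomorphism if and only if, whenever a ∈ H, b_1, b_2 ∈ T and φ(a) = b_1 b_2, there exist a_1, a_2 ∈ H with a = a_1 a_2, φ(a_1) ≃ b_1 and φ(a_2) ≃ b_2; and this holds if and only if, whenever a ∈ H and φ(a) = v_1⋯v_n with atoms v_1, …, v_n of T, there exist atoms u_1, …, u_n of H with a = u_1⋯u_n and φ(u_i) ≃ v_i for each i. (b) If moreover H is commutative, then φ is a transfer homomorphism if and only if φ is a weak transfer homomorphism. -/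
def MAtom {H : Type*} [Monoid H] (u : H) : Prop :=
  ¬ IsUnit u ∧ ∀ a b : H, u = a * b → IsUnit a ∨ IsUnit b

def TAssoc {H : Type*} [Monoid H] (a b : H) : Prop :=
  ∃ ε η : Hˣ, b = (ε : H) * a * (η : H)

def Atomic (H : Type*) [Monoid H] : Prop :=
  ∀ a : H, ¬ IsUnit a → ∃ l : List H, l ≠ [] ∧ (∀ u ∈ l, MAtom u) ∧ a = l.prod

def T1Cond {H T : Type*} [Monoid H] [Monoid T] (φ : H →* T) : Prop :=
  (∀ t : T, ∃ (ε η : Tˣ) (a : H), t = (ε : T) * φ a * (η : T)) ∧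
    ∀ a : H, IsUnit (φ a) ↔ IsUnit a

def IsTransferHom {H T : Type*} [Monoid H] [Monoid T] (φ : H →* T) : Prop :=
  T1Cond φ ∧
    ∀ (a : H) (b₁ b₂ : T), φ a = b₁ * b₂ →
      ∃ (a₁ a₂ : H) (ε : Tˣ), a = a₁ * a₂ ∧ φ a₁ = b₁ * ((ε⁻¹ : Tˣ) : T) ∧ φ a₂ = (ε : T) * b₂

def IsWeakTransferHom {H T : Type*} [Monoid H] [Monoid T] (φ : H →* T) : Prop :=
  T1Cond φ ∧
    ∀ (a : H) (n : ℕ), 0 < n → ∀ v : Fin n → T, (∀ i, MAtom (v i)) →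
      φ a = (List.ofFn v).prod →
      ∃ (u : Fin n → H) (σ : Equiv.Perm (Fin n)),
        (∀ i, MAtom (u i)) ∧ a = (List.ofFn u).prod ∧ ∀ i, TAssoc (φ (u i)) (v (σ i))

def IsIsoatomic {H T : Type*} [Monoid H] [Monoid T] (φ : H →* T) : Prop :=
  ∀ u v : H, MAtom u → MAtom v → TAssoc (φ u) (φ v) → TAssoc u v

def lengthsOf {H : Type*} [Monoid H] (a : H) : Set ℕ :=
  {n | (n = 0 ∧ IsUnit a) ∨
    ∃ l : List H, l ≠ [] ∧ (∀ u ∈ l, MAtom u) ∧ a = l.prod ∧ l.length = n}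

/-!
Write `ψ` for the composite of `φ` with the projection of `T` onto its reduced monoid
`Associates T`. In `T` a unit can be moved from one factor to another, so the condition on two
factors says that `ψ` lifts products exactly; peeling off one factor at a time, `ψ` then lifts
products of any positive length. Conversely, if products of atoms lift, write both factors of
`φ a = b₁ * b₂` as products of atoms, lift the concatenation and cut it in two. Cancellation in
`T` makes the two units in a lift of `b₁ * b₂` inverse to each other, as (T2) requires.
In a commutative `H` the permutation in (WT2) is undone by reordering the lifted atoms.
-/

/-- Exact lifting of binary products along `ψ`; applied to the composite of a homomorphism with the
projection onto `Associates T`, it is lifting of binary products up to associates. -/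
def LiftsMul {H M : Type*} [Monoid H] [Monoid M] (ψ : H →* M) : Prop :=
  ∀ (a : H) (x y : M), ψ a = x * y → ∃ a₁ a₂ : H, a = a₁ * a₂ ∧ ψ a₁ = x ∧ ψ a₂ = y

/-- Lifting of binary products along `φ` up to associates: condition (T2) of a transfer homomorphism
without the requirement that the units be inverse to each other. -/
def LiftsMulUpToAssoc {H T : Type*} [Monoid H] [Monoid T] (φ : H →* T) : Prop :=
  ∀ (a : H) (b₁ b₂ : T), φ a = b₁ * b₂ →
    ∃ a₁ a₂ : H, a = a₁ * a₂ ∧ TAssoc (φ a₁) b₁ ∧ TAssoc (φ a₂) b₂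

/-- Lifting of factorizations into atoms along `φ`, factor by factor and up to associates: condition
(WT2) of a weak transfer homomorphism with the identity permutation. -/
def LiftsAtomProd {H T : Type*} [Monoid H] [Monoid T] (φ : H →* T) : Prop :=
  ∀ (a : H) (n : ℕ), 0 < n → ∀ v : Fin n → T, (∀ i, MAtom (v i)) →
    φ a = (List.ofFn v).prod →
    ∃ u : Fin n → H, (∀ i, MAtom (u i)) ∧ a = (List.ofFn u).prod ∧ ∀ i, TAssoc (φ (u i)) (v i)

theorem mAtom_iff_irreducible {M : Type*} [Monoid M] {u : M} : MAtom u ↔ Irreducible u :=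
  irreducible_iff.symm

theorem tAssoc_iff_associated {T : Type*} [CommMonoid T] {x y : T} :
    TAssoc x y ↔ Associated x y := by
  constructor
  · rintro ⟨ε, η, rfl⟩
    exact ⟨ε * η, by rw [Units.val_mul, mul_left_comm, mul_assoc]⟩
  · rintro ⟨η, rfl⟩
    exact ⟨1, η, by simp⟩

theorem tAssoc_iff_mk_eq_mk {T : Type*} [CommMonoid T] {x y : T} :
    TAssoc x y ↔ Associates.mk x = Associates.mk y :=
  tAssoc_iff_associated.trans Associates.mk_eq_mk_iff_associated.symm

theorem LiftsMul.exists_ofFn {H M : Type*} [Monoid H] [Monoid M] {ψ : H →* M} (hψ : LiftsMul ψ)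
    {n : ℕ} {a : H} {x : Fin (n + 1) → M} (ha : ψ a = (List.ofFn x).prod) :
    ∃ u : Fin (n + 1) → H, a = (List.ofFn u).prod ∧ ∀ i, ψ (u i) = x i := by
  induction n generalizing a with
  | zero => exact ⟨fun _ => a, by simp, Fin.forall_fin_one.2 (by simpa using ha)⟩
  | succ n ih =>
    rw [List.ofFn_succ, List.prod_cons] at ha
    obtain ⟨a₁, a₂, rfl, h₁, h₂⟩ := hψ a _ _ ha
    obtain ⟨u, rfl, hu⟩ := ih h₂
    exact ⟨Fin.cons a₁ u, by simp [List.ofFn_succ], Fin.forall_fin_succ.2 ⟨h₁, hu⟩⟩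

section

variable {H T : Type*} [Monoid H]

theorem T1Cond.isLocalHom [Monoid T] {φ : H →* T} (hφ : T1Cond φ) : IsLocalHom φ :=
  ⟨fun a => (hφ.2 a).1⟩

theorem MAtom.of_tAssoc_map [CommMonoid T] {φ : H →* T} [IsLocalHom φ] {u : H} {v : T}
    (hv : MAtom v) (huv : TAssoc (φ u) v) : MAtom u := by
  rw [mAtom_iff_irreducible] at hv ⊢
  exact ((tAssoc_iff_associated.1 huv).irreducible_iff.2 hv).of_map

theorem LiftsMulUpToAssoc.liftsMul [CommMonoid T] {φ : H →* T} (hφ : LiftsMulUpToAssoc φ) :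
    LiftsMul (Associates.mkMonoidHom.comp φ) := by
  intro a x y hxy
  obtain ⟨b₁, rfl⟩ := Associates.mk_surjective x
  obtain ⟨b₂, rfl⟩ := Associates.mk_surjective y
  obtain ⟨ε, hε⟩ : Associated (b₁ * b₂) (φ a) := Associates.mk_eq_mk_iff_associated.1 hxy.symm
  obtain ⟨a₁, a₂, rfl, h₁, h₂⟩ := hφ a b₁ (b₂ * ε) (by rw [← hε, mul_assoc])
  refine ⟨a₁, a₂, rfl, tAssoc_iff_mk_eq_mk.1 h₁, (tAssoc_iff_mk_eq_mk.1 h₂).trans ?_⟩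
  exact Associates.mk_eq_mk_iff_associated.2 (associated_mul_unit_left _ _ ε.isUnit)

theorem LiftsMulUpToAssoc.liftsAtomProd [CommMonoid T] {φ : H →* T} [IsLocalHom φ]
    (hφ : LiftsMulUpToAssoc φ) : LiftsAtomProd φ := by
  intro a n hn v hv ha
  obtain ⟨n, rfl⟩ := Nat.exists_eq_add_one.2 hn
  have hmk : Associates.mkMonoidHom.comp φ a =
      (List.ofFn fun i => Associates.mkMonoidHom (v i)).prod := by
    rw [MonoidHom.comp_apply, ha, map_list_prod, List.map_ofFn, Function.comp_def]
  obtain ⟨u, rfl, hu⟩ := hφ.liftsMul.exists_ofFn hmk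
  have huv (i) : TAssoc (φ (u i)) (v i) := tAssoc_iff_mk_eq_mk.2 (hu i)
  exact ⟨u, fun i => (hv i).of_tAssoc_map (huv i), rfl, huv⟩

theorem LiftsAtomProd.exists_list [CommMonoid T] {φ : H →* T} (hφ : LiftsAtomProd φ)
    {a : H} {l : List T} (hl : l ≠ []) (hatom : ∀ v ∈ l, MAtom v) (ha : φ a = l.prod) :
    ∃ k : List H, a = k.prod ∧
      k.map (Associates.mkMonoidHom.comp φ) = l.map Associates.mkMonoidHom := by
  obtain ⟨u, -, rfl, hu⟩ := hφ a l.length (List.length_pos_iff.2 hl) l.get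
    (fun i => hatom _ (l.get_mem i)) (by rw [List.ofFn_get, ha])
  refine ⟨List.ofFn u, rfl, ?_⟩
  conv_rhs => rw [← List.ofFn_get l]
  rw [List.map_ofFn, List.map_ofFn]
  exact congrArg List.ofFn (funext fun i => tAssoc_iff_mk_eq_mk.1 (hu i))

theorem LiftsAtomProd.liftsMulUpToAssoc [CommMonoid T] (hT : Atomic T) {φ : H →* T}
    (hφ : LiftsAtomProd φ) : LiftsMulUpToAssoc φ := by
  intro a b₁ b₂ hab
  simp only [tAssoc_iff_mk_eq_mk]
  by_cases hb₁ : IsUnit b₁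
  · have hmk : Associates.mk b₁ = 1 := Associates.mk_eq_one.2 hb₁
    exact ⟨1, a, by simp, by simp [hmk], by rw [hab, ← Associates.mk_mul_mk, hmk, one_mul]⟩
  by_cases hb₂ : IsUnit b₂
  · have hmk : Associates.mk b₂ = 1 := Associates.mk_eq_one.2 hb₂
    exact ⟨a, 1, by simp, by rw [hab, ← Associates.mk_mul_mk, hmk, mul_one], by simp [hmk]⟩
  obtain ⟨l₁, hne, hl₁, rfl⟩ := hT b₁ hb₁
  obtain ⟨l₂, -, hl₂, rfl⟩ := hT b₂ hb₂
  obtain ⟨k, rfl, hk⟩ := hφ.exists_list (List.append_ne_nil_of_left_ne_nil hne l₂)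
    (List.forall_mem_append.2 ⟨hl₁, hl₂⟩) (hab.trans List.prod_append.symm)
  rw [List.map_append, List.map_eq_append_iff] at hk
  obtain ⟨k₁, k₂, rfl, hk₁, hk₂⟩ := hk
  have mk_prod_eq {k : List H} {l : List T}
      (hkl : k.map (Associates.mkMonoidHom.comp φ) = l.map Associates.mkMonoidHom) :
      Associates.mk (φ k.prod) = Associates.mk l.prod := by
    simpa only [← map_list_prod, MonoidHom.comp_apply, Associates.mkMonoidHom_apply] using
      congrArg List.prod hkl
  exact ⟨k₁.prod, k₂.prod, List.prod_append, mk_prod_eq hk₁, mk_prod_eq hk₂⟩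

theorem liftsMulUpToAssoc_iff_liftsAtomProd [CommMonoid T] (hT : Atomic T) {φ : H →* T}
    [IsLocalHom φ] : LiftsMulUpToAssoc φ ↔ LiftsAtomProd φ :=
  ⟨LiftsMulUpToAssoc.liftsAtomProd, LiftsAtomProd.liftsMulUpToAssoc hT⟩

theorem IsTransferHom.liftsMulUpToAssoc [Monoid T] {φ : H →* T} (hφ : IsTransferHom φ) :
    LiftsMulUpToAssoc φ := by
  intro a b₁ b₂ hab
  obtain ⟨a₁, a₂, ε, ha, h₁, h₂⟩ := hφ.2 a b₁ b₂ hab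
  exact ⟨a₁, a₂, ha, ⟨1, ε, by simp [h₁]⟩, ⟨ε⁻¹, 1, by simp [h₂]⟩⟩

theorem LiftsMulUpToAssoc.isTransferHom [CancelCommMonoid T] {φ : H →* T}
    (hφ : LiftsMulUpToAssoc φ) (h1 : T1Cond φ) : IsTransferHom φ := by
  refine ⟨h1, fun a b₁ b₂ hab => ?_⟩
  obtain ⟨a₁, a₂, rfl, h₁, -⟩ := hφ a b₁ b₂ hab
  obtain ⟨ε, rfl⟩ := tAssoc_iff_associated.1 h₁
  refine ⟨a₁, a₂, ε, rfl, by simp, ?_⟩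
  rw [map_mul, mul_assoc] at hab
  exact mul_left_cancel hab

theorem isTransferHom_iff_liftsMulUpToAssoc [CancelCommMonoid T] {φ : H →* T} (h1 : T1Cond φ) :
    IsTransferHom φ ↔ LiftsMulUpToAssoc φ :=
  ⟨IsTransferHom.liftsMulUpToAssoc, fun hφ => hφ.isTransferHom h1⟩

theorem LiftsAtomProd.isWeakTransferHom [Monoid T] {φ : H →* T} (hφ : LiftsAtomProd φ)
    (h1 : T1Cond φ) : IsWeakTransferHom φ := by
  refine ⟨h1, fun a n hn v hv ha => ?_⟩
  obtain ⟨u, hu, hau, huv⟩ := hφ a n hn v hv ha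
  exact ⟨u, 1, hu, hau, huv⟩

theorem IsWeakTransferHom.liftsAtomProd [Monoid T] {φ : H →* T} (hφ : IsWeakTransferHom φ)
    (hcomm : ∀ a b : H, a * b = b * a) : LiftsAtomProd φ := by
  intro a n hn v hv ha
  obtain ⟨u, σ, hu, rfl, huv⟩ := hφ.2 a n hn v hv ha
  refine ⟨u ∘ σ.symm, fun i => hu _, ?_, fun i => by simpa using huv (σ.symm i)⟩
  exact ((Equiv.Perm.ofFn_comp_perm σ.symm u).prod_eq' (List.pairwise_of_forall hcomm)).symm

theorem isWeakTransferHom_iff_liftsAtomProd [Monoid T] {φ : H →* T} (h1 : T1Cond φ)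
    (hcomm : ∀ a b : H, a * b = b * a) : IsWeakTransferHom φ ↔ LiftsAtomProd φ :=
  ⟨fun hφ => hφ.liftsAtomProd hcomm, fun hφ => hφ.isWeakTransferHom h1⟩

theorem transferHom_characterizations_general [CancelCommMonoid T] (hT : Atomic T) (φ : H →* T)
    (h1 : T1Cond φ) :
    (IsTransferHom φ ↔ LiftsMulUpToAssoc φ) ∧ (LiftsMulUpToAssoc φ ↔ LiftsAtomProd φ) ∧
      ((∀ a b : H, a * b = b * a) → (IsTransferHom φ ↔ IsWeakTransferHom φ)) := by
  have := h1.isLocalHom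
  have transfer_iff := isTransferHom_iff_liftsMulUpToAssoc h1
  have mul_iff_atomProd := liftsMulUpToAssoc_iff_liftsAtomProd hT (φ := φ)
  refine ⟨transfer_iff, mul_iff_atomProd, fun hcomm => ?_⟩
  rw [transfer_iff, mul_iff_atomProd, isWeakTransferHom_iff_liftsAtomProd h1 hcomm]

end

/-- Characterizations of transfer homomorphisms into a commutative atomic
cancellative monoid, for `φ` satisfying (T1); and if `H` is commutative, transfer and weak
transfer homomorphisms coincide. -/
theorem transferHom_characterizations {H T : Type*} [CancelMonoid H] [CancelCommMonoid T]
    (hT : Atomic T) (φ : H →* T) (h1 : T1Cond φ) :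
    (IsTransferHom φ ↔
      ∀ (a : H) (b₁ b₂ : T), φ a = b₁ * b₂ →
        ∃ a₁ a₂ : H, a = a₁ * a₂ ∧ TAssoc (φ a₁) b₁ ∧ TAssoc (φ a₂) b₂) ∧
    ((∀ (a : H) (b₁ b₂ : T), φ a = b₁ * b₂ →
        ∃ a₁ a₂ : H, a = a₁ * a₂ ∧ TAssoc (φ a₁) b₁ ∧ TAssoc (φ a₂) b₂) ↔
      ∀ (a : H) (n : ℕ), 0 < n → ∀ v : Fin n → T, (∀ i, MAtom (v i)) →
        φ a = (List.ofFn v).prod →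
        ∃ u : Fin n → H, (∀ i, MAtom (u i)) ∧ a = (List.ofFn u).prod ∧
          ∀ i, TAssoc (φ (u i)) (v i)) ∧
    ((∀ a b : H, a * b = b * a) → (IsTransferHom φ ↔ IsWeakTransferHom φ)) :=
  transferHom_characterizations_general hT φ h1
end

section
/- Let H be an atomic cancellative monoid and let q be an almost prime-like element of H with respect to ∣_p. Then q is prime-like if and only if V_q(ab) = V_q(a) + V_q(b) (the elementwise sum of sets of nonnegative integers) for all a, b ∈ H. -/
/-- Divisibility up to permutation: `a ∣_p b`. -/
def dvdP {H : Type*} [Monoid H] (a b : H) : Prop :=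
  ∃ (k l : ℕ) (u : Fin k → H) (v : Fin l → H),
    (∀ i, MAtom (u i)) ∧ (∀ j, MAtom (v j)) ∧
    TAssoc a (List.ofFn u).prod ∧ TAssoc b (List.ofFn v).prod ∧
    ∃ σ : Fin k ↪ Fin l, ∀ i, TAssoc (u i) (v (σ i))

/-- An almost prime-like element (with respect to `∣_p`). -/
def APLike {H : Type*} [Monoid H] (q : H) : Prop :=
  ¬ IsUnit q ∧ ∀ a b : H, dvdP q (a * b) → dvdP q a ∨ dvdP q b

/-- The number of entries of `l` associated to `q`. -/
noncomputable def countAssoc {H : Type*} [Monoid H] (l : List H) (q : H) : ℕ :=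
  Nat.card {i : Fin l.length // TAssoc (l.get i) q}

/-- The `q`-adic valuation of `a`: the set of numbers of occurrences (up to associativity)
of `q` in factorizations of `a` into atoms. -/
def Vq {H : Type*} [Monoid H] (q a : H) : Set ℕ :=
  {n | ∃ l : List H, (∀ u ∈ l, MAtom u) ∧ TAssoc a l.prod ∧ countAssoc l q = n}

/-- A prime-like element: almost prime-like, with singleton `q`-adic valuations. -/
def PrimeLike {H : Type*} [Monoid H] (q : H) : Prop :=
  APLike q ∧ ∀ a : H, ∃ n : ℕ, Vq q a = {n}

/-- `H` is permutably factorial. -/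
def PermutablyFactorial (H : Type*) [Monoid H] : Prop :=
  Atomic H ∧
    ∀ (k l : ℕ) (u : Fin k → H) (v : Fin l → H),
      (∀ i, MAtom (u i)) → (∀ j, MAtom (v j)) →
      (List.ofFn u).prod = (List.ofFn v).prod →
      ∃ σ : Fin k ≃ Fin l, ∀ i, TAssoc (u i) (v (σ i))

/-!
Concatenating a factorization of `a` with one of `b` always gives `V_q(a) + V_q(b) ⊆ V_q(ab)`, so
if all three sets are singletons, they are additive. Conversely, a unit and an atom have only one
factorization up to associates, hence a singleton valuation, and additivity propagates this to all
products of atoms.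

A unit is not a nonempty product of atoms: if an atom `x` had a right inverse `w`, then `x = x(wx)`
would force `wx`, and hence `x`, to be a unit.
-/

section

variable {H : Type*} [Monoid H] {a b q x : H} {l m : List H}

theorem TAssoc.refl (a : H) : TAssoc a a := ⟨1, 1, by simp⟩

theorem TAssoc.symm (h : TAssoc a b) : TAssoc b a := by
  obtain ⟨ε, η, rfl⟩ := h
  exact ⟨ε⁻¹, η⁻¹, by simp [mul_assoc]⟩

theorem TAssoc.trans {c : H} (hab : TAssoc a b) (hbc : TAssoc b c) : TAssoc a c := by
  obtain ⟨ε, η, rfl⟩ := hab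
  obtain ⟨ε', η', rfl⟩ := hbc
  exact ⟨ε' * ε, η * η', by simp [mul_assoc]⟩

theorem TAssoc.isUnit (h : TAssoc a b) (ha : IsUnit a) : IsUnit b := by
  obtain ⟨ε, η, rfl⟩ := h
  exact (ε.isUnit.mul ha).mul η.isUnit

theorem tAssoc_one_of_isUnit (ha : IsUnit a) : TAssoc a 1 := by
  obtain ⟨u, rfl⟩ := ha
  exact ⟨u⁻¹, 1, by simp⟩

theorem tAssoc_conjAct_smul (g : ConjAct Hˣ) (a : H) : TAssoc a (g • a) :=
  ⟨ConjAct.ofConjAct g, (ConjAct.ofConjAct g)⁻¹, ConjAct.units_smul_def g a⟩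

theorem MAtom.of_tAssoc (ha : MAtom a) (h : TAssoc a b) : MAtom b := by
  refine ⟨fun hb => ha.1 (h.symm.isUnit hb), fun x y hxy => ?_⟩
  obtain ⟨ε, η, rfl⟩ := h.symm
  have hsplit : (ε : H) * b * η = ε * x * (y * η) := by simp [hxy, mul_assoc]
  simpa using ha.2 _ _ hsplit

theorem MAtom.not_isUnit_mul (hx : MAtom x) (y : H) : ¬ IsUnit (x * y) := by
  intro hxy
  obtain ⟨v, hv⟩ := hxy.exists_right_inv
  have hw : x * (y * v) = 1 := by rw [← mul_assoc, hv]
  have hsplit : x = x * (y * v * x) := by rw [← mul_assoc, hw, one_mul]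
  have hwx : IsUnit (y * v * x) := (hx.2 _ _ hsplit).resolve_left hx.1
  obtain ⟨c, hc⟩ := hwx.exists_left_inv
  exact hx.1 (isUnit_iff_exists_and_exists.2 ⟨⟨y * v, hw⟩, c * (y * v), by rw [mul_assoc, hc]⟩)

theorem eq_nil_of_isUnit_prod (hl : ∀ u ∈ l, MAtom u) (h : IsUnit l.prod) : l = [] := by
  cases l with
  | nil => rfl
  | cons x t =>
    rw [List.prod_cons] at h
    exact absurd h ((hl x List.mem_cons_self).not_isUnit_mul t.prod)

theorem exists_eq_singleton_of_mAtom_prod (hl : ∀ u ∈ l, MAtom u) (h : MAtom l.prod) :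
    ∃ x, l = [x] := by
  cases l with
  | nil => exact absurd isUnit_one h.1
  | cons x t =>
    obtain ⟨hx, ht⟩ := List.forall_mem_cons.1 hl
    have htail : IsUnit t.prod := (h.2 x t.prod List.prod_cons).resolve_left hx.1
    exact ⟨x, by rw [eq_nil_of_isUnit_prod ht htail]⟩

open Classical in
theorem countAssoc_eq_countP (l : List H) (q : H) :
    countAssoc l q = l.countP (fun x => TAssoc x q) := by
  rw [countAssoc, Nat.card_eq_fintype_card, Fintype.card_subtype]
  induction l with
  | nil => rfl
  | cons x t ih =>
    have hsucc := Fin.card_filter_univ_succ fun i => TAssoc ((x :: t).get i) q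
    rw [List.countP_cons, ← ih]
    by_cases hx : TAssoc x q <;> simpa [hx] using hsucc

theorem countAssoc_nil (q : H) : countAssoc [] q = 0 := by
  rw [countAssoc_eq_countP, List.countP_nil]

theorem countAssoc_append (l m : List H) (q : H) :
    countAssoc (l ++ m) q = countAssoc l q + countAssoc m q := by
  simp only [countAssoc_eq_countP, List.countP_append]

theorem countAssoc_eq_of_forall₂ (h : List.Forall₂ TAssoc l m) (q : H) :
    countAssoc l q = countAssoc m q := by
  induction h with
  | nil => rfl
  | @cons x y _ _ hxy _ ih =>
    have hiff : TAssoc x q ↔ TAssoc y q := ⟨hxy.symm.trans, hxy.trans⟩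
    simp only [countAssoc_eq_countP] at ih ⊢
    rw [List.countP_cons, List.countP_cons, ih, decide_eq_decide.2 hiff]

theorem Vq_of_isUnit (q : H) (ha : IsUnit a) : Vq q a = {0} := by
  refine Set.eq_singleton_iff_unique_mem.2
    ⟨⟨[], by simp, tAssoc_one_of_isUnit ha, countAssoc_nil q⟩, ?_⟩
  rintro _ ⟨l, hl, hal, rfl⟩
  rw [eq_nil_of_isUnit_prod hl (hal.isUnit ha), countAssoc_nil]

theorem Vq_of_mAtom (q : H) (ha : MAtom a) : Vq q a = {countAssoc [a] q} := by
  refine Set.eq_singleton_iff_unique_mem.2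
    ⟨⟨[a], by simpa using ha, by simpa using TAssoc.refl a, rfl⟩, ?_⟩
  rintro _ ⟨l, hl, hal, rfl⟩
  obtain ⟨x, rfl⟩ := exists_eq_singleton_of_mAtom_prod hl (ha.of_tAssoc hal)
  rw [List.prod_singleton] at hal
  exact (countAssoc_eq_of_forall₂ (.cons hal .nil) q).symm

theorem add_mem_Vq_mul {i j : ℕ} (hi : i ∈ Vq q a) (hj : j ∈ Vq q b) : i + j ∈ Vq q (a * b) := by
  obtain ⟨l, hl, hal, rfl⟩ := hi
  obtain ⟨m, hm, hbm, rfl⟩ := hj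
  obtain ⟨ε, η, rfl⟩ := hal.symm
  obtain ⟨ε', η', rfl⟩ := hbm.symm
  -- The units between the two factorizations are moved to the right end of the product by
  -- conjugating every atom of the second one.
  let g : ConjAct Hˣ := ConjAct.toConjAct (η * ε')
  have hg : List.Forall₂ TAssoc m (m.map (g • ·)) :=
    List.forall₂_map_right_iff.2 (List.forall₂_same.2 fun u _ => tAssoc_conjAct_smul g u)
  refine ⟨l ++ m.map (g • ·), ?_, TAssoc.symm ⟨ε, η * ε' * η', ?_⟩, ?_⟩
  · have hgm : ∀ u ∈ m.map (g • ·), MAtom u :=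
      List.forall_mem_map.2 fun u hu => (hm u hu).of_tAssoc (tAssoc_conjAct_smul g u)
    exact List.forall_mem_append.2 ⟨hl, hgm⟩
  · rw [List.prod_append, ← List.smul_prod', ConjAct.units_smul_def]
    simp [g, mul_assoc]
  · rw [countAssoc_append, countAssoc_eq_of_forall₂ hg]

open Pointwise in
theorem Vq_prod_of_additive (hadd : ∀ a b : H, Vq q (a * b) = Vq q a + Vq q b)
    (hl : ∀ u ∈ l, MAtom u) : Vq q l.prod = {countAssoc l q} := by
  induction l with
  | nil => rw [List.prod_nil, Vq_of_isUnit q isUnit_one, countAssoc_nil]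
  | cons x t ih =>
    obtain ⟨hx, ht⟩ := List.forall_mem_cons.1 hl
    rw [List.prod_cons, hadd, Vq_of_mAtom q hx, ih ht, Set.singleton_add_singleton,
      ← countAssoc_append, List.singleton_append]

end

open Pointwise in
theorem primeLike_iff_valuation_additive_general {H : Type*} [Monoid H] (hH : Atomic H) (q : H) :
    (∀ a : H, ∃ n : ℕ, Vq q a = {n}) ↔ ∀ a b : H, Vq q (a * b) = Vq q a + Vq q b := by
  constructor
  · intro hsingle a b
    obtain ⟨i, hi⟩ := hsingle a
    obtain ⟨j, hj⟩ := hsingle b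
    obtain ⟨k, hk⟩ := hsingle (a * b)
    have hmem : i + j ∈ Vq q (a * b) := add_mem_Vq_mul (by simp [hi]) (by simp [hj])
    have hijk : i + j = k := by simpa [hk] using hmem
    rw [hi, hj, hk, Set.singleton_add_singleton, hijk]
  · intro hadd a
    by_cases ha : IsUnit a
    · exact ⟨0, Vq_of_isUnit q ha⟩
    · obtain ⟨l, -, hl, rfl⟩ := hH a ha
      exact ⟨countAssoc l q, Vq_prod_of_additive hadd hl⟩

open Pointwise in
/-- An almost prime-like element `q` is prime-like iff the `q`-adic
valuation is additive: `V_q(ab) = V_q(a) + V_q(b)` for all `a, b`. -/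
theorem primeLike_iff_valuation_additive {H : Type*} [CancelMonoid H]
    (hH : Atomic H) (q : H) (hq : APLike q) :
    (∀ a : H, ∃ n : ℕ, Vq q a = {n}) ↔ ∀ a b : H, Vq q (a * b) = Vq q a + Vq q b :=
  primeLike_iff_valuation_additive_general hH q
end
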